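/- Let d ≥ 2 be a positive integer. Then limsup_{n→∞} β_n^d / n^d = 1 and liminf_{n→∞} β_n^d / n^d ≥ 1/(d! · ζ(d)), where ζ denotes the Riemann zeta function (so ζ(d) = ∑_{k≥1} 1/k^d > 0). -/

import Mathlib

/-!
The proof is a pair of union bounds. For `n ≥ 1`, a tuple in `(ZMod n)^d` fails to be counted by
`betaZSF n d` only if the entries indexed by some non-empty `S` sum to zero (at most `n ^ (d - 1)`
tuples for each of fewer than `2 ^ d` sets `S`), or if all its entries and `n` share a common
divisor `k ≥ 2` (at most `(n / k) ^ d` tuples for each divisor `k` of `n`). This is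
`pow_le_betaZSF_add`.

* If `n` is prime, only `k = n` contributes to the second part, so the ratio `betaZSF n d / n ^ d`
  is at least `1 - (2 ^ d + 1) / n`; as the ratio never exceeds `1`, its limsup is `1`.
* For every `n` the ratio is at least `2 - ζ(d) - 2 ^ d / n`. Since `1 ≤ ζ(d) ≤ π² / 6 < 1.66`,
  `d! ζ(d) (2 - ζ(d)) ≥ 2 (1 - (ζ(d) - 1)²) > 1`, so `2 - ζ(d) > 1 / (d! ζ(d))`, and the liminf
  bound follows.
-/

/-- A tuple `v : Fin d → ZMod n` is zero-sum-free if no non-empty subset of its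
components sums to zero in `ZMod n`. -/
def ZeroSumFree {n d : ℕ} (v : Fin d → ZMod n) : Prop :=
  ∀ S : Finset (Fin d), S.Nonempty → ∑ i ∈ S, v i ≠ 0

/-- `alphaZSF n d` is the number of zero-sum-free `d`-tuples in `(ZMod n)^d`. -/
noncomputable def alphaZSF (n d : ℕ) : ℕ :=
  Nat.card {v : Fin d → ZMod n // ZeroSumFree v}

/-- A tuple is irreducible if `gcd(v₁, ..., v_d, n) = 1`, where components are
identified with their representatives in `{0, 1, ..., n-1}`. -/
def IrreducibleTuple {n d : ℕ} (v : Fin d → ZMod n) : Prop :=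
  Nat.gcd (Finset.univ.gcd fun i => (v i).val) n = 1

/-- `betaZSF n d` is the number of irreducible zero-sum-free `d`-tuples in `(ZMod n)^d`. -/
noncomputable def betaZSF (n d : ℕ) : ℕ :=
  Nat.card {v : Fin d → ZMod n // ZeroSumFree v ∧ IrreducibleTuple v}

/-- The solutions of `∑ i ∈ S, v i = 0` are determined by their coordinates other than a
fixed `i ∈ S`. -/
lemma card_sum_eq_zero_le {n d : ℕ} [NeZero n] (S : Finset (Fin d)) (hS : S.Nonempty) :
    Nat.card {v : Fin d → ZMod n // ∑ i ∈ S, v i = 0} ≤ n ^ (d - 1) := by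
  classical
  obtain ⟨i, hi⟩ := hS
  have hinj : Function.Injective
      (fun (v : {v : Fin d → ZMod n // ∑ i ∈ S, v i = 0}) (j : {j : Fin d // j ≠ i}) =>
        v.1 j.1) := by
    rintro ⟨v, hv⟩ ⟨w, hw⟩ h
    have hne : ∀ j, j ≠ i → v j = w j := fun j hj => congrFun h ⟨j, hj⟩
    have hrest : ∑ j ∈ S.erase i, v j = ∑ j ∈ S.erase i, w j :=
      Finset.sum_congr rfl fun j hj => hne j (Finset.ne_of_mem_erase hj)
    rw [← Finset.add_sum_erase S _ hi] at hv hw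
    rw [hrest] at hv
    refine Subtype.ext (funext fun j => ?_)
    by_cases hj : j = i
    · subst hj
      exact add_right_cancel (hv.trans hw.symm)
    · exact hne j hj
  refine (Nat.card_le_card_of_injective _ hinj).trans (le_of_eq ?_)
  rw [Nat.card_eq_fintype_card, Fintype.card_fun, ZMod.card, Fintype.card_subtype_compl,
    Fintype.card_fin, Fintype.card_subtype_eq]

lemma card_forall_dvd_le {n d k : ℕ} [NeZero n] (hk : k ∣ n) :
    Nat.card {v : Fin d → ZMod n // ∀ i, k ∣ (v i).val} ≤ (n / k) ^ d := by
  have hinj : Function.Injective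
      (fun (v : {v : Fin d → ZMod n // ∀ i, k ∣ (v i).val}) (i : Fin d) =>
        (⟨(v.1 i).val / k, Nat.div_lt_div_of_lt_of_dvd hk (ZMod.val_lt _)⟩ : Fin (n / k))) := by
    rintro ⟨v, hv⟩ ⟨w, hw⟩ h
    refine Subtype.ext (funext fun j => ZMod.val_injective n ?_)
    have hj : (v j).val / k = (w j).val / k := congrArg Fin.val (congrFun h j)
    exact (Nat.div_left_inj (hv j) (hw j)).1 hj
  refine (Nat.card_le_card_of_injective _ hinj).trans (le_of_eq ?_)
  simp

/-- Union bound: every tuple is counted by `betaZSF n d`, has a non-empty zero-sum subset, or has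
all its entries divisible by some divisor `k ≠ 1` of `n`. -/
lemma pow_le_betaZSF_add (n d : ℕ) [NeZero n] :
    n ^ d ≤ betaZSF n d + 2 ^ d * n ^ (d - 1) + ∑ k ∈ n.divisors.erase 1, (n / k) ^ d := by
  classical
  let A : Finset (Fin d → ZMod n) := Finset.univ.filter fun v => ZeroSumFree v ∧ IrreducibleTuple v
  let B : Finset (Fin d) → Finset (Fin d → ZMod n) :=
    fun S => Finset.univ.filter fun v => ∑ i ∈ S, v i = 0
  let C : ℕ → Finset (Fin d → ZMod n) := fun k => Finset.univ.filter fun v => ∀ i, k ∣ (v i).val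
  let P : Finset (Finset (Fin d)) := Finset.univ.filter fun S => S.Nonempty
  have hcover : (Finset.univ : Finset (Fin d → ZMod n)) ⊆
      (A ∪ P.biUnion B) ∪ (n.divisors.erase 1).biUnion C := by
    intro v _
    simp only [Finset.mem_union, Finset.mem_biUnion, A, B, C, P, Finset.mem_filter,
      Finset.mem_univ, true_and]
    by_cases hz : ZeroSumFree v
    · by_cases hirr : IrreducibleTuple v
      · exact Or.inl (Or.inl ⟨hz, hirr⟩)
      · refine Or.inr ⟨_, Finset.mem_erase.2 ⟨hirr, Nat.mem_divisors.2
          ⟨Nat.gcd_dvd_right _ _, NeZero.ne n⟩⟩, fun i => ?_⟩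
        exact (Nat.gcd_dvd_left _ _).trans (Finset.gcd_dvd (Finset.mem_univ i))
    · unfold ZeroSumFree at hz
      push Not at hz
      exact Or.inl (Or.inr hz)
  have hA : A.card = betaZSF n d := by
    rw [betaZSF, Nat.card_eq_fintype_card, Fintype.card_subtype]
  have hB : (P.biUnion B).card ≤ 2 ^ d * n ^ (d - 1) := by
    refine (Finset.card_biUnion_le_card_mul _ _ (n ^ (d - 1)) fun S hS => ?_).trans ?_
    · have := card_sum_eq_zero_le (n := n) S (Finset.mem_filter.1 hS).2
      rwa [Nat.card_eq_fintype_card, Fintype.card_subtype] at this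
    · refine Nat.mul_le_mul_right _ ((Finset.card_filter_le _ _).trans ?_)
      simp
  have hC : ((n.divisors.erase 1).biUnion C).card ≤ ∑ k ∈ n.divisors.erase 1, (n / k) ^ d := by
    refine Finset.card_biUnion_le.trans (Finset.sum_le_sum fun k hk => ?_)
    have := card_forall_dvd_le (n := n) (d := d)
      (Nat.dvd_of_mem_divisors (Finset.mem_of_mem_erase hk))
    rwa [Nat.card_eq_fintype_card, Fintype.card_subtype] at this
  have huniv : (Finset.univ : Finset (Fin d → ZMod n)).card = n ^ d := by
    simp [ZMod.card]
  have h1 := Finset.card_le_card hcover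
  have h2 := Finset.card_union_le (A ∪ P.biUnion B) ((n.divisors.erase 1).biUnion C)
  have h3 := Finset.card_union_le A (P.biUnion B)
  omega

lemma betaZSF_le_pow (n d : ℕ) [NeZero n] : betaZSF n d ≤ n ^ d := by
  refine (Nat.card_le_card_of_injective _ Subtype.val_injective).trans (le_of_eq ?_)
  simp [ZMod.card]

/-- The union bound `pow_le_betaZSF_add`, divided by `n ^ d`. -/
lemma one_sub_le_betaZSF_div {n d : ℕ} [NeZero n] (hd : 2 ≤ d) :
    1 - 2 ^ d / (n : ℝ) - ∑ k ∈ n.divisors.erase 1, 1 / (k : ℝ) ^ d ≤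
      (betaZSF n d : ℝ) / (n : ℝ) ^ d := by
  have hn : (0 : ℝ) < n := Nat.cast_pos.2 (NeZero.pos n)
  have h : ((n ^ d : ℕ) : ℝ) ≤ _ := Nat.cast_le.2 (pow_le_betaZSF_add n d)
  push_cast at h
  have hsum : ∑ k ∈ n.divisors.erase 1, (((n / k : ℕ) : ℝ)) ^ d =
      (∑ k ∈ n.divisors.erase 1, 1 / (k : ℝ) ^ d) * (n : ℝ) ^ d := by
    rw [Finset.sum_mul]
    refine Finset.sum_congr rfl fun k hk => ?_
    have hk' := Finset.mem_of_mem_erase hk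
    have hk0 : (k : ℝ) ≠ 0 := Nat.cast_ne_zero.2 (Nat.pos_of_mem_divisors hk').ne'
    rw [Nat.cast_div (Nat.dvd_of_mem_divisors hk') hk0, div_pow]
    ring
  have hpow : (n : ℝ) ^ d = n ^ (d - 1) * n := by
    rw [← pow_succ, Nat.sub_add_cancel (by omega)]
  have hmid : 2 ^ d / (n : ℝ) * (n : ℝ) ^ d = 2 ^ d * (n : ℝ) ^ (d - 1) := by
    rw [hpow]; field_simp
  rw [le_div_iff₀ (by positivity), sub_mul, sub_mul, hmid, ← hsum]
  linarith

lemma tsum_pnat_one_div_pow {d : ℕ} (hd : 2 ≤ d) :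
    ∑' k : ℕ+, (1 : ℝ) / (k : ℝ) ^ d = ∑' k : ℕ, (1 : ℝ) / (k : ℝ) ^ d := by
  rw [(Real.summable_one_div_nat_pow.2 (show 1 < d by omega)).tsum_eq_zero_add,
    tsum_pnat_eq_tsum_succ (f := fun k : ℕ => (1 : ℝ) / (k : ℝ) ^ d)]
  simp [show d ≠ 0 by omega]

lemma one_le_tsum_one_div_pow {d : ℕ} (hd : 2 ≤ d) : 1 ≤ ∑' k : ℕ, (1 : ℝ) / (k : ℝ) ^ d := by
  have := (Real.summable_one_div_nat_pow.2 (show 1 < d by omega)).le_tsum 1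
    fun _ _ => by positivity
  simpa using this

lemma tsum_one_div_pow_lt {d : ℕ} (hd : 2 ≤ d) : ∑' k : ℕ, (1 : ℝ) / (k : ℝ) ^ d < 1.66 := by
  have h2 : ∑' k : ℕ, (1 : ℝ) / (k : ℝ) ^ d ≤ Real.pi ^ 2 / 6 := by
    rw [← hasSum_zeta_two.tsum_eq]
    refine Summable.tsum_le_tsum (fun k => ?_)
      (Real.summable_one_div_nat_pow.2 (show 1 < d by omega)) hasSum_zeta_two.summable
    rcases Nat.eq_zero_or_pos k with rfl | hk
    · simp [show d ≠ 0 by omega]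
    · have hk1 : (1 : ℝ) ≤ k := Nat.one_le_cast.2 hk
      gcongr
  have := Real.pi_lt_d2
  have := Real.pi_pos
  nlinarith

lemma sum_divisors_erase_le {n d : ℕ} [NeZero n] (hd : 2 ≤ d) :
    ∑ k ∈ n.divisors.erase 1, 1 / (k : ℝ) ^ d ≤ ∑' k : ℕ, (1 : ℝ) / (k : ℝ) ^ d - 1 := by
  have h := (Real.summable_one_div_nat_pow.2 (show 1 < d by omega)).sum_le_tsum n.divisors
    fun _ _ => by positivity
  rw [← Finset.add_sum_erase _ _ (Nat.one_mem_divisors.2 (NeZero.ne n))] at h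
  simp only [Nat.cast_one, one_pow, div_one] at h
  linarith

lemma one_div_factorial_mul_lt {d : ℕ} (hd : 2 ≤ d) {z : ℝ} (h1 : 1 ≤ z) (h2 : z < 1.66) :
    1 / ((d.factorial : ℝ) * z) < 2 - z := by
  have hf : (2 : ℝ) ≤ d.factorial := by
    exact_mod_cast (Nat.factorial_le hd : Nat.factorial 2 ≤ d.factorial)
  rw [div_lt_iff₀ (by positivity)]
  have h3 : (1 : ℝ) / 2 < (2 - z) * z := by nlinarith
  nlinarith

open Filter in
theorem beta_limsup_liminf (d : ℕ) (hd : 2 ≤ d) :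
    Filter.limsup (fun n : ℕ => (betaZSF n d : ℝ) / (n : ℝ) ^ d) Filter.atTop = 1 ∧
    1 / ((d.factorial : ℝ) * ∑' k : ℕ+, (1 : ℝ) / (k : ℝ) ^ d) ≤
      Filter.liminf (fun n : ℕ => (betaZSF n d : ℝ) / (n : ℝ) ^ d) Filter.atTop := by
  have hle : ∀ᶠ n : ℕ in atTop, (betaZSF n d : ℝ) / (n : ℝ) ^ d ≤ 1 := by
    filter_upwards [eventually_gt_atTop 0] with n hn
    have : NeZero n := ⟨hn.ne'⟩
    exact div_le_one_of_le₀ (by exact_mod_cast betaZSF_le_pow n d) (by positivity)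
  have hnonneg : ∀ n : ℕ, 0 ≤ (betaZSF n d : ℝ) / (n : ℝ) ^ d := fun n => by positivity
  have hbdd : IsBoundedUnder (· ≤ ·) atTop (fun n : ℕ => (betaZSF n d : ℝ) / (n : ℝ) ^ d) :=
    ⟨1, eventually_map.2 hle⟩
  have hbdd' : IsBoundedUnder (· ≥ ·) atTop (fun n : ℕ => (betaZSF n d : ℝ) / (n : ℝ) ^ d) :=
    ⟨0, eventually_map.2 (Eventually.of_forall hnonneg)⟩
  refine ⟨le_antisymm (limsup_le_of_le hbdd'.isCoboundedUnder_le hle) ?_, ?_⟩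
  · refine le_of_forall_lt_imp_le_of_dense fun a ha => ?_
    refine le_limsup_of_frequently_le ?_ hbdd
    have hlim : Tendsto (fun n : ℕ => (2 ^ d + 1 : ℝ) / n) atTop (nhds 0) :=
      tendsto_const_div_atTop_nhds_zero_nat _
    have hev := hlim.eventually (gt_mem_nhds (sub_pos.2 ha))
    refine ((Nat.frequently_atTop_iff_infinite.2 Nat.infinite_setOfPred_prime).and_eventually
      hev).mono ?_
    rintro n ⟨hp, hn⟩
    have hp : n.Prime := hp
    have : NeZero n := ⟨hp.ne_zero⟩
    have hn1 : (1 : ℝ) ≤ n := Nat.one_le_cast.2 hp.one_le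
    have h := one_sub_le_betaZSF_div (n := n) hd
    have hdiv : n.divisors.erase 1 = {n} := by
      rw [hp.divisors, Finset.erase_insert (by simpa using hp.one_lt.ne)]
    rw [hdiv, Finset.sum_singleton] at h
    have hpow : 1 / (n : ℝ) ^ d ≤ 1 / n :=
      one_div_le_one_div_of_le (by positivity) (le_self_pow₀ hn1 (by omega))
    rw [add_div] at hn
    linarith
  · rw [tsum_pnat_one_div_pow hd]
    refine le_liminf_of_le hbdd.isCoboundedUnder_ge ?_
    have hgap := one_div_factorial_mul_lt hd (one_le_tsum_one_div_pow hd) (tsum_one_div_pow_lt hd)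
    have hlim : Tendsto (fun n : ℕ => (2 ^ d : ℝ) / n) atTop (nhds 0) :=
      tendsto_const_div_atTop_nhds_zero_nat _
    filter_upwards [hlim.eventually (gt_mem_nhds (sub_pos.2 hgap)), eventually_gt_atTop 0]
      with n hn hn0
    have : NeZero n := ⟨hn0.ne'⟩
    have h := one_sub_le_betaZSF_div (n := n) hd
    have h' := sum_divisors_erase_le (n := n) hd
    linarith
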